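/- Let Ω ⊆ ℝ^N be a G-invariant open set, where G is a closed subgroup of O(N) satisfying (G2) and σ : G → {1,−1} is a continuous surjective group homomorphism. Let Θ be the set of maps γ : [0,1] → Ḣ^s(Ω)^σ_G that are continuous with respect to the metric d(u,v) = ‖u−v‖ (Gagliardo seminorm) and satisfy γ(0) = 0, γ(1) not a.e. zero, and E(γ(1);Ω) ≤ 0. Then the mountain-pass value equals the Nehari value: inf_{γ∈Θ} sup_{t∈[0,1]} E(γ(t);Ω) = m(Ω)^σ_G. -/

import Mathlib

open MeasureTheory Real

noncomputable section

abbrev Euc (N : ℕ) := EuclideanSpace ℝ (Fin N)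

/-- The critical exponent `2*_s = 2N/(N-2s)`. -/
def twoStar (N : ℕ) (s : ℝ) : ℝ := 2 * N / (N - 2 * s)

/-- Square of the Gagliardo seminorm `‖u‖²`. -/
def gagSq (N : ℕ) (s : ℝ) (u : Euc N → ℝ) : ℝ :=
  ∫ p : Euc N × Euc N, (u p.1 - u p.2) ^ 2 / dist p.1 p.2 ^ ((N : ℝ) + 2 * s)

/-- The Gagliardo seminorm `‖u‖`. -/
def gagNorm (N : ℕ) (s : ℝ) (u : Euc N → ℝ) : ℝ := Real.sqrt (gagSq N s u)

/-- Finiteness of the Gagliardo seminorm (`‖u‖ < ∞`). -/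
def GagFinite (N : ℕ) (s : ℝ) (u : Euc N → ℝ) : Prop :=
  Integrable (fun p : Euc N × Euc N => (u p.1 - u p.2) ^ 2 / dist p.1 p.2 ^ ((N : ℝ) + 2 * s))

/-- Membership in `Ḣ^s(Ω)`: measurable, in `L^{2*_s}(ℝ^N)`, finite Gagliardo seminorm,
and vanishing a.e. outside `Ω`. -/
structure MemHs (N : ℕ) (s : ℝ) (Ω : Set (Euc N)) (u : Euc N → ℝ) : Prop where
  meas : Measurable u
  lp : Integrable fun x : Euc N => |u x| ^ twoStar N s
  fin : GagFinite N s u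
  vanish : ∀ᵐ x : Euc N, x ∉ Ω → u x = 0

/-- The energy functional `E(u;Ω)`. -/
def energy (N : ℕ) (s : ℝ) (Ω : Set (Euc N)) (u : Euc N → ℝ) : ℝ :=
  (1 / 2) * gagSq N s u - (1 / twoStar N s) * ∫ x in Ω, |u x| ^ twoStar N s

/-- The Nehari functional `N(u;Ω)`. -/
def nehariFun (N : ℕ) (s : ℝ) (Ω : Set (Euc N)) (u : Euc N → ℝ) : ℝ :=
  gagSq N s u - ∫ x in Ω, |u x| ^ twoStar N s

/-- The pairing `⟨E'(u), v⟩` (with domain `Ω`). -/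
def pairing (N : ℕ) (s : ℝ) (Ω : Set (Euc N)) (u v : Euc N → ℝ) : ℝ :=
  (∫ p : Euc N × Euc N, (u p.1 - u p.2) * (v p.1 - v p.2) / dist p.1 p.2 ^ ((N : ℝ) + 2 * s))
    - ∫ x in Ω, |u x| ^ (twoStar N s - 2) * u x * v x

/-- The sharp fractional Sobolev constant `S(N,s)`. -/
def sobolevS (N : ℕ) (s : ℝ) : ℝ :=
  (2 : ℝ) ^ (-(2 * s)) * Real.pi ^ (-s) *
    (Real.Gamma ((N - 2 * s) / 2) / Real.Gamma ((N + 2 * s) / 2)) *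
    (Real.Gamma N / Real.Gamma (N / 2)) ^ (2 * s / N)

/-- The orthogonal group `O(N)`. -/
abbrev ONgrp (N : ℕ) := Matrix.orthogonalGroup (Fin N) ℝ

/-- The linear action of `O(N)` on `ℝ^N`. -/
def ogAct {N : ℕ} (g : ONgrp N) (x : Euc N) : Euc N :=
  Matrix.toEuclideanLin (g : Matrix (Fin N) (Fin N) ℝ) x

/-- `σ`-equivariance of `u : ℝ^N → ℝ` under a subgroup `G` of `O(N)`:
`u (g x) = σ(g) u (x)` for all `g ∈ G`, `x ∈ ℝ^N`. -/
def IsEquivariant {N : ℕ} (G : Subgroup (ONgrp N)) (σ : G →* ℤˣ) (u : Euc N → ℝ) : Prop :=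
  ∀ g : G, ∀ x : Euc N, u (ogAct (g : ONgrp N) x) = ((σ g : ℤ) : ℝ) * u x

/-- `G`-invariance of a set. -/
def IsInvariantSet {N : ℕ} (G : Subgroup (ONgrp N)) (Ω : Set (Euc N)) : Prop :=
  ∀ g : G, ∀ x ∈ Ω, ogAct (g : ONgrp N) x ∈ Ω

/-- Condition (G1): every `G`-orbit is infinite or a single point. -/
def CondG1 {N : ℕ} (G : Subgroup (ONgrp N)) : Prop :=
  ∀ x : Euc N, ({y : Euc N | ∃ g : G, ogAct (g : ONgrp N) x = y}).Infinite ∨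
    ∀ g : G, ogAct (g : ONgrp N) x = x

/-- Condition (G2): there is a point `ξ` with `σ = 1` on the stabilizer of `ξ`. -/
def CondG2 {N : ℕ} (G : Subgroup (ONgrp N)) (σ : G →* ℤˣ) : Prop :=
  ∃ ξ : Euc N, ∀ g : G, ogAct (g : ONgrp N) ξ = ξ → σ g = 1

/-- The Nehari level `m(Ω)^σ_G = inf { E(u;Ω) : u ∈ N(Ω)^σ_G }`. -/
def mval (N : ℕ) (s : ℝ) (Ω : Set (Euc N)) (G : Subgroup (ONgrp N)) (σ : G →* ℤˣ) : ℝ :=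
  sInf {c : ℝ | ∃ u : Euc N → ℝ, MemHs N s Ω u ∧ IsEquivariant G σ u ∧
    ¬ (∀ᵐ x : Euc N, u x = 0) ∧ nehariFun N s Ω u = 0 ∧ c = energy N s Ω u}

/-!
Along a ray `t ↦ t u` the energy is `t² ‖u‖² / 2 - t^p |u|_p^p / p` with `p = 2*_s > 2`. On the
Nehari manifold `‖u‖² = |u|_p^p`, and Bernoulli's inequality shows that this is largest at `t = 1`;
it becomes negative for large `t`, so the ray is, up to reparametrisation, an admissible path whose
maximal energy is `E(u)`. Conversely, the fractional Sobolev inequality gives `|u|_p^p < ‖u‖²` for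
small `u ≠ 0`, while `|u|_p^p ≥ ‖u‖²` where `E(u) ≤ 0`, so by the intermediate value theorem every
admissible path meets the Nehari manifold. The argument takes place in any class of functions that
is closed under multiplication by nonnegative scalars.

For the Sobolev inequality, every point `y` of a ball around `x` either has `2 |u y| ≥ |u x|` or
contributes to the Gagliardo integrand at `(x, y)`; a suitable radius bounds `|u x|^p` pointwise by
the integral of that integrand in `y`.
-/

/-! ### Real-variable inequalities for the exponents `2 < p` -/

section RealVariable

open Filter Topology

variable {p : ℝ}

theorem exists_pos_forall_rpow_lt_sq {K : ℝ} (hp : 2 < p) (hK : 0 ≤ K) :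
    ∃ δ > 0, ∀ x, 0 < x → x ≤ δ → (K * x) ^ p < x ^ 2 := by
  have htendsto : Tendsto (fun x : ℝ => K ^ p * x ^ (p - 2)) (𝓝 0) (𝓝 0) := by
    have h := (continuousAt_rpow_const 0 (p - 2) (Or.inr (by linarith))).tendsto.const_mul (K ^ p)
    rwa [zero_rpow (by linarith), mul_zero] at h
  obtain ⟨δ, hδ, hlt⟩ := Metric.eventually_nhds_iff.1 (htendsto.eventually_lt_const one_pos)
  refine ⟨δ / 2, by positivity, fun x hx hxδ => ?_⟩
  have hdist : dist x 0 < δ := by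
    rw [dist_zero_right, norm_of_nonneg hx.le]
    linarith
  calc (K * x) ^ p = K ^ p * x ^ (p - 2) * x ^ 2 := by
        rw [mul_rpow hK hx.le, mul_assoc, ← rpow_two, ← rpow_add hx, sub_add_cancel]
    _ < x ^ 2 := mul_lt_of_lt_one_left (by positivity) (hlt hdist)

theorem exists_sq_eq_rpow_of_isPreconnected {α : Type*} [TopologicalSpace α] {S : Set α}
    (hS : IsPreconnected S) {K : ℝ} (hp : 2 < p) (hK : 0 ≤ K) {a b : α → ℝ}
    (ha : ContinuousOn a S) (hb : ContinuousOn b S) (hb_nonneg : ∀ t ∈ S, 0 ≤ b t)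
    (hba : ∀ t ∈ S, b t ≤ K * a t) {l r : α} (hl : l ∈ S) (hr : r ∈ S) (hbl : b l = 0)
    (hbr : 0 < b r) (hle : a r ^ 2 ≤ b r ^ p) :
    ∃ t ∈ S, 0 < b t ∧ a t ^ 2 = b t ^ p := by
  have hp0 : 0 < p := by linarith
  obtain ⟨δ, hδ, hsmall⟩ := exists_pos_forall_rpow_lt_sq hp hK
  -- Truncating `a` from below keeps the zero found by the intermediate value theorem off `b = 0`.
  have hcont : ContinuousOn (fun t => b t ^ p - max (a t) δ ^ 2) S :=
    (hb.rpow_const fun _ _ => Or.inr hp0.le).sub ((ha.sup continuousOn_const).pow 2)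
  have hleft : b l ^ p - max (a l) δ ^ 2 ≤ 0 := by
    rw [hbl, zero_rpow hp0.ne', zero_sub, neg_nonpos]
    positivity
  have hδr : δ ≤ a r := by
    by_contra! hlt
    have har : 0 < a r := pos_of_mul_pos_right (hbr.trans_le (hba r hr)) hK
    have := rpow_le_rpow hbr.le (hba r hr) hp0.le
    linarith [hsmall (a r) har hlt.le]
  have hright : 0 ≤ b r ^ p - max (a r) δ ^ 2 := by
    rw [max_eq_left hδr]
    linarith
  obtain ⟨t, ht, hzero⟩ := hS.intermediate_value hl hr hcont ⟨hleft, hright⟩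
  have heq : b t ^ p = max (a t) δ ^ 2 := sub_eq_zero.1 hzero
  have hδt : δ ≤ a t := by
    by_contra! hlt
    have := rpow_le_rpow (hb_nonneg t ht) ((hba t ht).trans
      (mul_le_mul_of_nonneg_left hlt.le hK)) hp0.le
    rw [heq, max_eq_right hlt.le] at this
    linarith [hsmall δ hδ le_rfl]
  rw [max_eq_left hδt] at heq
  refine ⟨t, ht, (hb_nonneg t ht).lt_of_ne' fun hbt => ?_, heq.symm⟩
  rw [hbt, zero_rpow hp0.ne'] at heq
  have : 0 < a t := hδ.trans_le hδt
  exact (by positivity : a t ^ 2 ≠ 0) heq.symm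

theorem half_sq_sub_rpow_div_le {c : ℝ} (hp : 2 ≤ p) (hc : 0 ≤ c) :
    c ^ 2 / 2 - c ^ p / p ≤ 1 / 2 - 1 / p := by
  have hbernoulli := one_add_mul_self_le_rpow_one_add (s := c ^ 2 - 1) (p := p / 2)
    (by linarith [sq_nonneg c]) (by linarith)
  rw [add_sub_cancel, ← rpow_natCast_mul hc, Nat.cast_ofNat,
    mul_div_cancel₀ p two_ne_zero] at hbernoulli
  have hp0 : 0 < p := by linarith
  have hdiv : (1 + p / 2 * (c ^ 2 - 1)) / p ≤ c ^ p / p :=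
    div_le_div_of_nonneg_right hbernoulli hp0.le
  have hexpand : (1 + p / 2 * (c ^ 2 - 1)) / p = 1 / p + (c ^ 2 / 2 - 1 / 2) := by field_simp
  linarith

theorem exists_pos_half_sq_sub_rpow_div_nonpos (hp : 2 < p) :
    ∃ c : ℝ, 0 < c ∧ c ^ 2 / 2 - c ^ p / p ≤ 0 := by
  obtain ⟨c, hle, hc⟩ := (((tendsto_rpow_atTop (sub_pos.2 hp)).eventually_ge_atTop (p / 2)).and
    (eventually_gt_atTop 0)).exists
  refine ⟨c, hc, sub_nonpos.2 ?_⟩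
  rw [le_div_iff₀ (by linarith)]
  calc c ^ 2 / 2 * p = p / 2 * c ^ 2 := by ring
    _ ≤ c ^ (p - 2) * c ^ 2 := by gcongr
    _ = c ^ p := by rw [← rpow_two, ← rpow_add hc, sub_add_cancel]

/-- The choice `ω r ^ d = 2 ^ (p + 1) * A / t ^ p` makes the first summand half of the left-hand
side. -/
theorem rpow_le_of_forall_radius {d σ ω A D t : ℝ} (hd : 0 < d) (hω : 0 < ω) (hA : 0 < A)
    (ht : 0 < t) (hp : p = 2 + p * (σ / d))
    (h : ∀ r > 0, ω * r ^ d ≤ 2 ^ p / t ^ p * A + 4 / t ^ 2 * r ^ (d + σ) * D) :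
    t ^ p ≤ 8 / ω * (2 ^ (p + 1) / ω * A) ^ (σ / d) * D := by
  set Q := 2 ^ (p + 1) / ω * A / t ^ p with hQ_def
  have hQ : 0 < Q := by positivity
  have hradius := h (Q ^ d⁻¹) (by positivity)
  rw [rpow_add (by positivity), rpow_inv_rpow hQ.le hd.ne', ← rpow_mul hQ.le, inv_mul_eq_div]
    at hradius
  have hhalf : 2 ^ p / t ^ p * A = ω * Q / 2 := by
    rw [hQ_def, rpow_add two_pos, rpow_one]
    field_simp
  have hsq : ω * t ^ 2 ≤ 8 * Q ^ (σ / d) * D := by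
    have hmul : ω * t ^ 2 * Q ≤ 8 * Q ^ (σ / d) * D * Q := by
      have hclear : 4 / t ^ 2 * (Q * Q ^ (σ / d)) * D * t ^ 2 = 4 * Q * Q ^ (σ / d) * D := by
        field_simp
      have := mul_le_mul_of_nonneg_right hradius (sq_nonneg t)
      rw [add_mul, hclear, hhalf] at this
      linarith
    exact le_of_mul_le_mul_right hmul hQ
  have hQ_rpow : Q ^ (σ / d) * t ^ (p * (σ / d)) = (2 ^ (p + 1) / ω * A) ^ (σ / d) := by
    rw [rpow_mul ht.le, ← mul_rpow hQ.le (by positivity), div_mul_cancel₀ _ (by positivity)]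
  calc t ^ p = ω * t ^ 2 * t ^ (p * (σ / d)) / ω := by
        rw [mul_assoc, mul_div_cancel_left₀ _ hω.ne', ← rpow_two, ← rpow_add ht, ← hp]
    _ ≤ 8 * Q ^ (σ / d) * D * t ^ (p * (σ / d)) / ω := by gcongr
    _ = 8 / ω * (Q ^ (σ / d) * t ^ (p * (σ / d))) * D := by ring
    _ = 8 / ω * (2 ^ (p + 1) / ω * A) ^ (σ / d) * D := by rw [hQ_rpow]

end RealVariable

/-! ### Lebesgue norms -/

section LpNorm

variable {α : Type*} {m : MeasurableSpace α} {μ : Measure α}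

theorem abs_lpNorm_sub_lpNorm_le {E : Type*} [NormedAddCommGroup E] {p : ENNReal} {f g : α → E}
    (hf : MemLp f p μ) (hg : MemLp g p μ) (hp : 1 ≤ p) :
    |lpNorm f p μ - lpNorm g p μ| ≤ lpNorm (f - g) p μ := by
  have hfg := lpNorm_le_lpNorm_add_lpNorm_sub' (f := f) hg hp
  have hgf := lpNorm_le_lpNorm_add_lpNorm_sub (f := g) hf hp
  exact abs_le.2 ⟨by linarith, by linarith⟩

theorem memLp_ofReal_iff_integrable_abs_rpow {p : ℝ} (hp : 0 < p) {f : α → ℝ}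
    (hf : AEStronglyMeasurable f μ) :
    MemLp f (ENNReal.ofReal p) μ ↔ Integrable (fun x => |f x| ^ p) μ := by
  rw [← integrable_norm_rpow_iff hf (ENNReal.ofReal_pos.2 hp).ne' ENNReal.ofReal_ne_top,
    ENNReal.toReal_ofReal hp.le]
  rfl

theorem lpNorm_ofReal_rpow {p : ℝ} (hp : 0 < p) {f : α → ℝ} (hf : AEStronglyMeasurable f μ) :
    lpNorm f (ENNReal.ofReal p) μ ^ p = ∫ x, |f x| ^ p ∂μ := by
  rw [lpNorm_eq_integral_norm_rpow_toReal (ENNReal.ofReal_pos.2 hp).ne' ENNReal.ofReal_ne_top hf,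
    ENNReal.toReal_ofReal hp.le, rpow_inv_rpow (by positivity) hp.ne']
  rfl

end LpNorm

/-! ### Difference quotients -/

/-- The difference quotient `(u x - u y) / |x - y| ^ (β / 2)`, whose square is the Gagliardo
integrand with exponent `β`; it is `0` on the diagonal. -/
def diffQuot {X : Type*} [Dist X] (β : ℝ) (u : X → ℝ) (q : X × X) : ℝ :=
  (u q.1 - u q.2) / dist q.1 q.2 ^ (β / 2)

section DiffQuot

variable {X : Type*} {β : ℝ} {u : X → ℝ}

theorem diffQuot_sq [PseudoMetricSpace X] (β : ℝ) (u : X → ℝ) (q : X × X) :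
    diffQuot β u q ^ 2 = (u q.1 - u q.2) ^ 2 / dist q.1 q.2 ^ β := by
  rw [diffQuot, div_pow, ← rpow_mul_natCast dist_nonneg, Nat.cast_ofNat,
    div_mul_cancel₀ β two_ne_zero]

theorem diffQuot_sub [Dist X] (β : ℝ) (u v : X → ℝ) :
    diffQuot β (fun x => u x - v x) = diffQuot β u - diffQuot β v := by
  ext q
  simp only [diffQuot, Pi.sub_apply]
  ring

theorem diffQuot_const_mul [Dist X] (β c : ℝ) (u : X → ℝ) :
    diffQuot β (fun x => c * u x) = c • diffQuot β u := by
  ext q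
  simp only [diffQuot, Pi.smul_apply, smul_eq_mul]
  ring

theorem measurable_diffQuot [PseudoMetricSpace X] [SecondCountableTopology X] [MeasurableSpace X]
    [OpensMeasurableSpace X] (β : ℝ) (hu : Measurable u) : Measurable (diffQuot β u) :=
  ((hu.comp measurable_fst).sub (hu.comp measurable_snd)).div (measurable_dist.pow_const _)

/-- Either `2 |u y| ≥ |u x|`, and the first summand is at least `1`, or `|u x - u y| ≥ |u x| / 2`,
and the second one is. -/
theorem one_le_rpow_add_diffQuot_sq [MetricSpace X] {p r : ℝ} (hp : 0 ≤ p) (hβ : 0 ≤ β) {x y : X}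
    (hx : u x ≠ 0) (hxy : dist x y ≤ r) :
    1 ≤ 2 ^ p / |u x| ^ p * |u y| ^ p + 4 / |u x| ^ 2 * r ^ β * diffQuot β u (x, y) ^ 2 := by
  have hux : 0 < |u x| := abs_pos.2 hx
  have hr : 0 ≤ r := dist_nonneg.trans hxy
  rcases le_or_gt |u x| (2 * |u y|) with hlarge | hsmall
  · have hvalue : 1 ≤ 2 ^ p / |u x| ^ p * |u y| ^ p := by
      rw [div_mul_eq_mul_div, one_le_div (by positivity), ← mul_rpow two_pos.le (abs_nonneg _)]
      gcongr
    exact le_add_of_le_of_nonneg hvalue (by positivity)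
  · have hdist : 0 < dist x y := dist_pos.2 <| by
      rintro rfl
      linarith
    have hsq : |u x| ^ 2 ≤ 4 * (u x - u y) ^ 2 := by
      rw [← sq_abs (u x - u y), show 4 * |u x - u y| ^ 2 = (2 * |u x - u y|) ^ 2 by ring]
      gcongr
      linarith [abs_sub_abs_le_abs_sub (u x) (u y)]
    have hquot : 1 ≤ 4 / |u x| ^ 2 * r ^ β * diffQuot β u (x, y) ^ 2 := by
      rw [diffQuot_sq, show 4 / |u x| ^ 2 * r ^ β * ((u x - u y) ^ 2 / dist x y ^ β) =
        (4 * (u x - u y) ^ 2 * r ^ β) / (|u x| ^ 2 * dist x y ^ β) by ring,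
        one_le_div (by positivity)]
      gcongr
    exact le_add_of_nonneg_of_le (by positivity) hquot

theorem measureReal_closedBall_le [MetricSpace X] [MeasurableSpace X] [OpensMeasurableSpace X]
    {μ : Measure X} {p : ℝ} (r : ℝ) (hp : 0 ≤ p) (hβ : 0 ≤ β) {x : X} (hx : u x ≠ 0)
    (hu : Integrable (fun y => |u y| ^ p) μ)
    (hquot : Integrable (fun y => diffQuot β u (x, y) ^ 2) μ) :
    μ.real (Metric.closedBall x r) ≤ 2 ^ p / |u x| ^ p * (∫ y, |u y| ^ p ∂μ) +
      4 / |u x| ^ 2 * |r| ^ β * ∫ y, diffQuot β u (x, y) ^ 2 ∂μ := by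
  rw [← integral_indicator_one Metric.isClosed_closedBall.measurableSet, ← integral_const_mul,
    ← integral_const_mul, ← integral_add (hu.const_mul _) (hquot.const_mul _)]
  refine integral_mono_of_nonneg (.of_forall (Set.indicator_nonneg fun _ _ => zero_le_one))
    ((hu.const_mul _).add (hquot.const_mul _)) (.of_forall (Set.indicator_le' ?_ ?_))
  · exact fun y hy => one_le_rpow_add_diffQuot_sq hp hβ hx <| by
      rw [dist_comm]
      exact (Metric.mem_closedBall.1 hy).trans (le_abs_self r)
  · exact fun y _ => by positivity

end DiffQuot

/-! ### The spaces `Ḣ^s(Ω)` -/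

/-- The critical Lebesgue norm `|u|_{2*_s}`. -/
def critNorm (N : ℕ) (s : ℝ) (u : Euc N → ℝ) : ℝ :=
  lpNorm u (ENNReal.ofReal (twoStar N s)) volume

section HomogeneousSobolev

variable {N : ℕ} {s : ℝ}

theorem two_lt_twoStar (hs0 : 0 < s) (hsN : 2 * s < N) : 2 < twoStar N s := by
  rw [twoStar, lt_div_iff₀ (by linarith)]
  linarith

theorem twoStar_mul_one_sub (hN : N ≠ 0) (hsN : (N : ℝ) ≠ 2 * s) :
    twoStar N s * (1 - 2 * s / N) = 2 := by
  have hne : (N : ℝ) - 2 * s ≠ 0 := sub_ne_zero.2 hsN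
  rw [twoStar]
  field_simp

theorem gagSq_eq_integral_diffQuot_sq (u : Euc N → ℝ) :
    gagSq N s u = ∫ q, diffQuot ((N : ℝ) + 2 * s) u q ^ 2 := by
  simp_rw [diffQuot_sq]
  rfl

theorem gagFinite_iff_integrable_diffQuot_sq {u : Euc N → ℝ} :
    GagFinite N s u ↔ Integrable fun q => diffQuot ((N : ℝ) + 2 * s) u q ^ 2 := by
  simp_rw [diffQuot_sq]
  rfl

theorem gagFinite_iff_memLp_diffQuot {u : Euc N → ℝ} (hu : Measurable u) :
    GagFinite N s u ↔ MemLp (diffQuot ((N : ℝ) + 2 * s) u) 2 :=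
  gagFinite_iff_integrable_diffQuot_sq.trans
    (memLp_two_iff_integrable_sq (measurable_diffQuot _ hu).aestronglyMeasurable).symm

theorem gagNorm_eq_lpNorm_diffQuot {u : Euc N → ℝ} (hu : Measurable u) :
    gagNorm N s u = lpNorm (diffQuot ((N : ℝ) + 2 * s) u) 2 volume := by
  rw [lpNorm_eq_integral_norm_rpow_toReal two_ne_zero ENNReal.ofNat_ne_top
    (measurable_diffQuot _ hu).aestronglyMeasurable, gagNorm, gagSq_eq_integral_diffQuot_sq,
    sqrt_eq_rpow]
  simp

theorem gagNorm_sq (u : Euc N → ℝ) : gagNorm N s u ^ 2 = gagSq N s u := by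
  refine sq_sqrt ?_
  rw [gagSq_eq_integral_diffQuot_sq]
  positivity

theorem gagNorm_nonneg (u : Euc N → ℝ) : 0 ≤ gagNorm N s u :=
  sqrt_nonneg _

theorem critNorm_nonneg (u : Euc N → ℝ) : 0 ≤ critNorm N s u :=
  lpNorm_nonneg

theorem gagNorm_const_mul (c : ℝ) (u : Euc N → ℝ) :
    gagNorm N s (fun x => c * u x) = |c| * gagNorm N s u := by
  simp only [gagNorm, gagSq_eq_integral_diffQuot_sq, diffQuot_const_mul, Pi.smul_apply,
    smul_eq_mul, mul_pow, integral_const_mul]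
  rw [sqrt_mul (sq_nonneg c), sqrt_sq_eq_abs]

theorem critNorm_const_mul (c : ℝ) (u : Euc N → ℝ) :
    critNorm N s (fun x => c * u x) = |c| * critNorm N s u :=
  lpNorm_const_smul c u volume

theorem IsEquivariant.const_mul {G : Subgroup (ONgrp N)} {σ : G →* ℤˣ} {u : Euc N → ℝ}
    (hu : IsEquivariant G σ u) (c : ℝ) : IsEquivariant G σ (fun x => c * u x) := fun g x => by
  simp only [hu g x, mul_left_comm]

namespace MemHs

variable {Ω : Set (Euc N)} {u v : Euc N → ℝ}

theorem memLp (hp : 0 < twoStar N s) (hu : MemHs N s Ω u) :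
    MemLp u (ENNReal.ofReal (twoStar N s)) :=
  (memLp_ofReal_iff_integrable_abs_rpow hp hu.meas.aestronglyMeasurable).2 hu.lp

theorem memLp_diffQuot (hu : MemHs N s Ω u) : MemLp (diffQuot ((N : ℝ) + 2 * s) u) 2 :=
  (gagFinite_iff_memLp_diffQuot hu.meas).1 hu.fin

theorem sub (hp : 0 < twoStar N s) (hu : MemHs N s Ω u) (hv : MemHs N s Ω v) :
    MemHs N s Ω (fun x => u x - v x) where
  meas := hu.meas.sub hv.meas
  lp := (memLp_ofReal_iff_integrable_abs_rpow hp (hu.meas.sub hv.meas).aestronglyMeasurable).1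
    ((hu.memLp hp).sub (hv.memLp hp))
  fin := by
    rw [gagFinite_iff_memLp_diffQuot (u := fun x => u x - v x) (hu.meas.sub hv.meas), diffQuot_sub]
    exact hu.memLp_diffQuot.sub hv.memLp_diffQuot
  vanish := by
    filter_upwards [hu.vanish, hv.vanish] with x hux hvx hx
    rw [hux hx, hvx hx, sub_zero]

theorem const_mul (hu : MemHs N s Ω u) (c : ℝ) : MemHs N s Ω (fun x => c * u x) where
  meas := hu.meas.const_mul c
  lp := by
    simp_rw [abs_mul, mul_rpow (abs_nonneg _) (abs_nonneg _)]
    exact hu.lp.const_mul _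
  fin := by
    rw [gagFinite_iff_memLp_diffQuot (hu.meas.const_mul c), diffQuot_const_mul]
    exact hu.memLp_diffQuot.const_smul c
  vanish := by
    filter_upwards [hu.vanish] with x hux hx
    rw [hux hx, mul_zero]

theorem critNorm_rpow (hp : 0 < twoStar N s) (hu : MemHs N s Ω u) :
    critNorm N s u ^ twoStar N s = ∫ x, |u x| ^ twoStar N s :=
  lpNorm_ofReal_rpow hp hu.meas.aestronglyMeasurable

theorem setIntegral_eq_critNorm_rpow (hp : 0 < twoStar N s) (hu : MemHs N s Ω u) :
    ∫ x in Ω, |u x| ^ twoStar N s = critNorm N s u ^ twoStar N s := by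
  rw [hu.critNorm_rpow hp]
  refine setIntegral_eq_integral_of_ae_compl_eq_zero ?_
  filter_upwards [hu.vanish] with x hux hx
  rw [hux hx, abs_zero, zero_rpow hp.ne']

theorem critNorm_eq_zero_iff (hp : 0 < twoStar N s) (hu : MemHs N s Ω u) :
    critNorm N s u = 0 ↔ ∀ᵐ x, u x = 0 :=
  lpNorm_eq_zero (hu.memLp hp) (ENNReal.ofReal_pos.2 hp).ne'

theorem critNorm_pos_iff (hp : 0 < twoStar N s) (hu : MemHs N s Ω u) :
    0 < critNorm N s u ↔ ¬ ∀ᵐ x, u x = 0 := by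
  rw [(critNorm_nonneg u).lt_iff_ne', ne_eq, hu.critNorm_eq_zero_iff hp]

theorem energy_eq (hp : 0 < twoStar N s) (hu : MemHs N s Ω u) :
    energy N s Ω u =
      gagNorm N s u ^ 2 / 2 - critNorm N s u ^ twoStar N s / twoStar N s := by
  rw [energy, hu.setIntegral_eq_critNorm_rpow hp, gagNorm_sq]
  ring

theorem nehariFun_eq_zero_iff (hp : 0 < twoStar N s) (hu : MemHs N s Ω u) :
    nehariFun N s Ω u = 0 ↔ gagNorm N s u ^ 2 = critNorm N s u ^ twoStar N s := by
  rw [nehariFun, hu.setIntegral_eq_critNorm_rpow hp, gagNorm_sq, sub_eq_zero]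

theorem abs_gagNorm_sub_gagNorm_le (hu : MemHs N s Ω u) (hv : MemHs N s Ω v) :
    |gagNorm N s u - gagNorm N s v| ≤ gagNorm N s (fun x => u x - v x) := by
  rw [gagNorm_eq_lpNorm_diffQuot hu.meas, gagNorm_eq_lpNorm_diffQuot hv.meas,
    gagNorm_eq_lpNorm_diffQuot (u := fun x => u x - v x) (hu.meas.sub hv.meas), diffQuot_sub]
  exact abs_lpNorm_sub_lpNorm_le hu.memLp_diffQuot hv.memLp_diffQuot one_le_two

theorem abs_critNorm_sub_critNorm_le (hp : 1 ≤ twoStar N s) (hu : MemHs N s Ω u)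
    (hv : MemHs N s Ω v) :
    |critNorm N s u - critNorm N s v| ≤ critNorm N s (fun x => u x - v x) :=
  have hp0 : 0 < twoStar N s := by linarith
  abs_lpNorm_sub_lpNorm_le (hu.memLp hp0) (hv.memLp hp0) (ENNReal.one_le_ofReal.2 hp)

end MemHs

/-! ### The fractional Sobolev inequality -/

theorem abs_rpow_twoStar_le_integral_diffQuot_sq (hs0 : 0 < s) (hsN : 2 * s < N)
    {u : Euc N → ℝ} {x : Euc N} (hu : Integrable fun y => |u y| ^ twoStar N s)
    (hA : 0 < ∫ y, |u y| ^ twoStar N s)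
    (hquot : Integrable fun y => diffQuot ((N : ℝ) + 2 * s) u (x, y) ^ 2) :
    |u x| ^ twoStar N s ≤
      8 / volume.real (Metric.ball (0 : Euc N) 1) *
        (2 ^ (twoStar N s + 1) / volume.real (Metric.ball (0 : Euc N) 1) *
          ∫ y, |u y| ^ twoStar N s) ^ (2 * s / N) *
        ∫ y, diffQuot ((N : ℝ) + 2 * s) u (x, y) ^ 2 := by
  have hp := two_lt_twoStar hs0 hsN
  have hN : (0 : ℝ) < N := by linarith
  rcases eq_or_ne (u x) 0 with hx | hx
  · rw [hx, abs_zero, zero_rpow (by linarith)]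
    positivity
  have hω : 0 < volume.real (Metric.ball (0 : Euc N) 1) :=
    ENNReal.toReal_pos (Metric.measure_ball_pos _ _ one_pos).ne' measure_ball_lt_top.ne
  refine rpow_le_of_forall_radius hN hω hA (abs_pos.2 hx) ?_ fun r hr => ?_
  · linarith [twoStar_mul_one_sub (by exact_mod_cast hN.ne') hsN.ne']
  · have hball := measureReal_closedBall_le r (by linarith) (by linarith) hx hu hquot
    rwa [measureReal_def, Measure.addHaar_closedBall _ _ hr.le, finrank_euclideanSpace_fin,
      ENNReal.toReal_mul, ENNReal.toReal_ofReal (by positivity), ← measureReal_def,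
      ← rpow_natCast r, mul_comm, abs_of_pos hr] at hball

theorem exists_critNorm_le_gagNorm (hs0 : 0 < s) (hsN : 2 * s < N) :
    ∃ K, 0 < K ∧ ∀ {Ω : Set (Euc N)} {u : Euc N → ℝ}, MemHs N s Ω u →
      critNorm N s u ≤ K * gagNorm N s u := by
  have hp : 0 < twoStar N s := two_pos.trans (two_lt_twoStar hs0 hsN)
  have hN : N ≠ 0 := by
    rintro rfl
    norm_num at hsN
    linarith
  set ω := volume.real (Metric.ball (0 : Euc N) 1)
  have hω : 0 < ω :=
    ENNReal.toReal_pos (Metric.measure_ball_pos _ _ one_pos).ne' measure_ball_lt_top.ne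
  set C := 8 / ω * (2 ^ (twoStar N s + 1) / ω) ^ (2 * s / N) with hC_def
  have hC : 0 < C := by positivity
  refine ⟨√C, sqrt_pos.2 hC, fun {Ω u} hu => ?_⟩
  rcases (critNorm_nonneg (s := s) u).eq_or_lt with hzero | hpos
  · rw [← hzero]
    exact mul_nonneg (sqrt_nonneg _) (gagNorm_nonneg u)
  have hA : 0 < ∫ y, |u y| ^ twoStar N s := by
    rw [← hu.critNorm_rpow hp]
    positivity
  have hquot : Integrable (fun q => diffQuot ((N : ℝ) + 2 * s) u q ^ 2) (volume.prod volume) :=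
    gagFinite_iff_integrable_diffQuot_sq.1 hu.fin
  have hintegral : critNorm N s u ^ twoStar N s ≤
      C * (critNorm N s u ^ twoStar N s) ^ (2 * s / N) * gagNorm N s u ^ 2 := by
    have h := integral_mono_ae hu.lp (hquot.integral_prod_left.const_mul _)
      (hquot.prod_right_ae.mono fun x hx =>
        abs_rpow_twoStar_le_integral_diffQuot_sq hs0 hsN hu.lp hA hx)
    rw [integral_const_mul, ← integral_prod _ hquot, ← hu.critNorm_rpow hp,
      mul_rpow (by positivity) (by positivity), ← mul_assoc, ← hC_def] at h
    rwa [gagNorm_sq, gagSq_eq_integral_diffQuot_sq]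
  have hsq : critNorm N s u ^ 2 ≤ C * gagNorm N s u ^ 2 := by
    rw [← rpow_two, ← twoStar_mul_one_sub hN hsN.ne', rpow_mul hpos.le,
      rpow_sub (by positivity), rpow_one, div_le_iff₀ (by positivity)]
    linarith
  refine le_of_sq_le_sq ?_ (mul_nonneg (sqrt_nonneg _) (gagNorm_nonneg u))
  rwa [mul_pow, sq_sqrt hC.le]

/-! ### Paths and rays -/

/-- Continuity on `I` of a path of functions for the distance `d(u, v) = ‖u - v‖`. -/
def IsGagContinuousOn (N : ℕ) (s : ℝ) (γ : ℝ → Euc N → ℝ) (I : Set ℝ) : Prop :=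
  ∀ t ∈ I, ∀ ε > (0 : ℝ), ∃ δ > (0 : ℝ), ∀ t' ∈ I,
    |t' - t| < δ → gagNorm N s (fun x => γ t' x - γ t x) < ε

namespace IsGagContinuousOn

variable {γ : ℝ → Euc N → ℝ} {I : Set ℝ} {Ω : Set (Euc N)}

theorem continuousOn_of_abs_sub_le (hγ : IsGagContinuousOn N s γ I) {K : ℝ} (hK : 0 < K)
    {F : ℝ → ℝ}
    (hF : ∀ t ∈ I, ∀ t' ∈ I, |F t' - F t| ≤ K * gagNorm N s (fun x => γ t' x - γ t x)) :
    ContinuousOn F I := by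
  rw [Metric.continuousOn_iff]
  intro t ht ε hε
  obtain ⟨δ, hδ, hclose⟩ := hγ t ht (ε / K) (by positivity)
  refine ⟨δ, hδ, fun t' ht' hdist => ?_⟩
  calc dist (F t') (F t) ≤ K * gagNorm N s (fun x => γ t' x - γ t x) := hF t ht t' ht'
    _ < ε := (lt_div_iff₀' hK).1 (hclose t' ht' hdist)

theorem continuousOn_gagNorm (hγ : IsGagContinuousOn N s γ I)
    (hmem : ∀ t ∈ I, MemHs N s Ω (γ t)) : ContinuousOn (fun t => gagNorm N s (γ t)) I :=
  hγ.continuousOn_of_abs_sub_le one_pos fun t ht t' ht' => by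
    rw [one_mul]
    exact (hmem t' ht').abs_gagNorm_sub_gagNorm_le (hmem t ht)

theorem continuousOn_critNorm (hγ : IsGagContinuousOn N s γ I) (hs0 : 0 < s) (hsN : 2 * s < N)
    (hmem : ∀ t ∈ I, MemHs N s Ω (γ t)) : ContinuousOn (fun t => critNorm N s (γ t)) I := by
  have hp := two_lt_twoStar hs0 hsN
  obtain ⟨K, hK, hsobolev⟩ := exists_critNorm_le_gagNorm hs0 hsN
  refine hγ.continuousOn_of_abs_sub_le hK fun t ht t' ht' => ?_
  exact ((hmem t' ht').abs_critNorm_sub_critNorm_le (by linarith) (hmem t ht)).trans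
    (hsobolev ((hmem t' ht').sub (by linarith) (hmem t ht)))

theorem continuousOn_energy (hγ : IsGagContinuousOn N s γ I) (hs0 : 0 < s) (hsN : 2 * s < N)
    (hmem : ∀ t ∈ I, MemHs N s Ω (γ t)) : ContinuousOn (fun t => energy N s Ω (γ t)) I := by
  have hp : 0 < twoStar N s := two_pos.trans (two_lt_twoStar hs0 hsN)
  refine ContinuousOn.congr ?_ fun t ht => (hmem t ht).energy_eq hp
  exact (((hγ.continuousOn_gagNorm hmem).pow 2).div_const _).sub
    (((hγ.continuousOn_critNorm hs0 hsN hmem).rpow_const fun _ _ => Or.inr hp.le).div_const _)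

end IsGagContinuousOn

theorem isGagContinuousOn_ray (w : Euc N → ℝ) (I : Set ℝ) :
    IsGagContinuousOn N s (fun t x => t * w x) I := by
  intro t _ ε hε
  have hnorm := gagNorm_nonneg (s := s) w
  refine ⟨ε / (gagNorm N s w + 1), by positivity, fun t' _ hclose => ?_⟩
  simp_rw [← sub_mul, gagNorm_const_mul]
  rw [lt_div_iff₀ (by positivity)] at hclose
  linarith [abs_nonneg (t' - t)]

namespace MemHs

variable {Ω : Set (Euc N)} {u : Euc N → ℝ}

theorem energy_const_mul (hp : 0 < twoStar N s) (hu : MemHs N s Ω u)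
    (hnehari : nehariFun N s Ω u = 0) {c : ℝ} (hc : 0 ≤ c) :
    energy N s Ω (fun x => c * u x) =
      (c ^ 2 / 2 - c ^ twoStar N s / twoStar N s) * gagNorm N s u ^ 2 := by
  rw [(hu.const_mul c).energy_eq hp, gagNorm_const_mul, critNorm_const_mul, abs_of_nonneg hc,
    mul_rpow hc (critNorm_nonneg u), ← (hu.nehariFun_eq_zero_iff hp).1 hnehari]
  ring

theorem energy_const_mul_le (hp : 2 ≤ twoStar N s) (hu : MemHs N s Ω u)
    (hnehari : nehariFun N s Ω u = 0) {c : ℝ} (hc : 0 ≤ c) :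
    energy N s Ω (fun x => c * u x) ≤ energy N s Ω u := by
  have hp0 : 0 < twoStar N s := by linarith
  have hone := hu.energy_const_mul hp0 hnehari zero_le_one
  simp only [one_mul, one_pow, one_rpow] at hone
  rw [hu.energy_const_mul hp0 hnehari hc, hone]
  exact mul_le_mul_of_nonneg_right (half_sq_sub_rpow_div_le hp hc) (sq_nonneg _)

theorem exists_energy_const_mul_nonpos (hp : 2 < twoStar N s) (hu : MemHs N s Ω u)
    (hnehari : nehariFun N s Ω u = 0) :
    ∃ c : ℝ, 0 < c ∧ energy N s Ω (fun x => c * u x) ≤ 0 := by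
  obtain ⟨c, hc, hle⟩ := exists_pos_half_sq_sub_rpow_div_nonpos hp
  refine ⟨c, hc, ?_⟩
  rw [hu.energy_const_mul (two_pos.trans hp) hnehari hc.le]
  exact mul_nonpos_of_nonpos_of_nonneg hle (sq_nonneg _)

end MemHs

end HomogeneousSobolev

/-! ### The two minimax levels of a class of functions -/

/-- The paths over which the mountain-pass value of a class `X ⊆ Ḣ^s(Ω)` is taken: continuous in
the Gagliardo seminorm, in `X`, from `0` to a nonzero function of nonpositive energy. Only the
values on `[0, 1]` matter. -/
def IsMountainPassPath (N : ℕ) (s : ℝ) (Ω : Set (Euc N)) (X : Set (Euc N → ℝ))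
    (γ : ℝ → Euc N → ℝ) : Prop :=
  (∀ t ∈ Set.Icc (0 : ℝ) 1, γ t ∈ X) ∧ IsGagContinuousOn N s γ (Set.Icc 0 1) ∧
    (∀ x, γ 0 x = 0) ∧ ¬ (∀ᵐ x, γ 1 x = 0) ∧ energy N s Ω (γ 1) ≤ 0

/-- The mountain-pass value `inf_γ sup_{[0,1]} E(γ(t);Ω)` over the mountain-pass paths in `X`. -/
def mountainPassLevel (N : ℕ) (s : ℝ) (Ω : Set (Euc N)) (X : Set (Euc N → ℝ)) : ℝ :=
  sInf {c : ℝ | ∃ γ, IsMountainPassPath N s Ω X γ ∧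
    c = sSup ((fun t => energy N s Ω (γ t)) '' Set.Icc (0 : ℝ) 1)}

/-- The Nehari manifold of a class `X ⊆ Ḣ^s(Ω)`. -/
def nehariManifold (N : ℕ) (s : ℝ) (Ω : Set (Euc N)) (X : Set (Euc N → ℝ)) :
    Set (Euc N → ℝ) :=
  {u | u ∈ X ∧ ¬ (∀ᵐ x, u x = 0) ∧ nehariFun N s Ω u = 0}

/-- The infimum of the energy on the Nehari manifold of `X`. -/
def nehariLevel (N : ℕ) (s : ℝ) (Ω : Set (Euc N)) (X : Set (Euc N → ℝ)) : ℝ :=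
  sInf {c : ℝ | ∃ u, u ∈ nehariManifold N s Ω X ∧ c = energy N s Ω u}

section MinimaxLevels

variable {N : ℕ} {s : ℝ} {Ω : Set (Euc N)} {X : Set (Euc N → ℝ)}

theorem IsMountainPassPath.exists_mem_nehariManifold {γ : ℝ → Euc N → ℝ}
    (hγ : IsMountainPassPath N s Ω X γ) (hs0 : 0 < s) (hsN : 2 * s < N)
    (hX : ∀ u ∈ X, MemHs N s Ω u) :
    ∃ t ∈ Set.Icc (0 : ℝ) 1, γ t ∈ nehariManifold N s Ω X := by
  obtain ⟨hγX, hcont, hstart, hend, hE⟩ := hγ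
  have hp := two_lt_twoStar hs0 hsN
  have hp0 : 0 < twoStar N s := by linarith
  have hmem : ∀ t ∈ Set.Icc (0 : ℝ) 1, MemHs N s Ω (γ t) := fun t ht => hX _ (hγX t ht)
  have hmem0 := hmem 0 (Set.left_mem_Icc.2 zero_le_one)
  have hmem1 := hmem 1 (Set.right_mem_Icc.2 zero_le_one)
  obtain ⟨K, hK, hsobolev⟩ := exists_critNorm_le_gagNorm (N := N) hs0 hsN
  have hle : gagNorm N s (γ 1) ^ 2 ≤ critNorm N s (γ 1) ^ twoStar N s := by
    have hB : 0 ≤ critNorm N s (γ 1) ^ twoStar N s := rpow_nonneg (critNorm_nonneg _) _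
    rw [hmem1.energy_eq hp0] at hE
    have : critNorm N s (γ 1) ^ twoStar N s / twoStar N s ≤
        critNorm N s (γ 1) ^ twoStar N s / 2 := by gcongr
    linarith
  obtain ⟨t, ht, hpos, heq⟩ := exists_sq_eq_rpow_of_isPreconnected isPreconnected_Icc hp hK.le
    (hcont.continuousOn_gagNorm hmem) (hcont.continuousOn_critNorm hs0 hsN hmem)
    (fun t _ => critNorm_nonneg (γ t)) (fun t ht => hsobolev (hmem t ht))
    (Set.left_mem_Icc.2 zero_le_one) (Set.right_mem_Icc.2 zero_le_one)
    ((hmem0.critNorm_eq_zero_iff hp0).2 (.of_forall hstart))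
    ((hmem1.critNorm_pos_iff hp0).2 hend) hle
  exact ⟨t, ht, hγX t ht, ((hmem t ht).critNorm_pos_iff hp0).1 hpos,
    ((hmem t ht).nehariFun_eq_zero_iff hp0).2 heq⟩

theorem IsMountainPassPath.bddAbove_energy {γ : ℝ → Euc N → ℝ}
    (hγ : IsMountainPassPath N s Ω X γ) (hs0 : 0 < s) (hsN : 2 * s < N)
    (hX : ∀ u ∈ X, MemHs N s Ω u) :
    BddAbove ((fun t => energy N s Ω (γ t)) '' Set.Icc (0 : ℝ) 1) :=
  isCompact_Icc.bddAbove_image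
    (hγ.2.1.continuousOn_energy hs0 hsN fun t ht => hX _ (hγ.1 t ht))

theorem isMountainPassPath_ray (hcone : ∀ u ∈ X, ∀ c : ℝ, 0 ≤ c → (fun x => c * u x) ∈ X)
    {w : Euc N → ℝ} (hw : w ∈ X) (hne : ¬ ∀ᵐ x, w x = 0) (hE : energy N s Ω w ≤ 0) :
    IsMountainPassPath N s Ω X fun t x => t * w x :=
  ⟨fun t ht => hcone w hw t ht.1, isGagContinuousOn_ray w _, fun _ => zero_mul _,
    by simpa only [one_mul] using hne, by simpa only [one_mul] using hE⟩

theorem exists_isMountainPassPath_energy_le (hs0 : 0 < s) (hsN : 2 * s < N)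
    (hX : ∀ u ∈ X, MemHs N s Ω u)
    (hcone : ∀ u ∈ X, ∀ c : ℝ, 0 ≤ c → (fun x => c * u x) ∈ X) {u : Euc N → ℝ}
    (hu : u ∈ nehariManifold N s Ω X) :
    ∃ γ, IsMountainPassPath N s Ω X γ ∧
      ∀ t ∈ Set.Icc (0 : ℝ) 1, energy N s Ω (γ t) ≤ energy N s Ω u := by
  obtain ⟨huX, hne, hnehari⟩ := hu
  have hp := two_lt_twoStar hs0 hsN
  obtain ⟨c, hc, hE⟩ := (hX u huX).exists_energy_const_mul_nonpos hp hnehari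
  refine ⟨_, isMountainPassPath_ray hcone (hcone u huX c hc.le) (fun hzero => hne ?_) hE,
    fun t ht => ?_⟩
  · exact hzero.mono fun x hx => (mul_eq_zero.1 hx).resolve_left hc.ne'
  · simp_rw [← mul_assoc]
    exact (hX u huX).energy_const_mul_le hp.le hnehari (mul_nonneg ht.1 hc.le)

theorem statement8_general (hs : s ∈ Set.Ioo (0 : ℝ) 1) (hsN : 2 * s < N)
    (hX : ∀ u ∈ X, MemHs N s Ω u)
    (hcone : ∀ u ∈ X, ∀ c : ℝ, 0 ≤ c → (fun x => c * u x) ∈ X) :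
    mountainPassLevel N s Ω X = nehariLevel N s Ω X := by
  refine csInf_eq_csInf_of_forall_exists_le ?_ ?_
  · rintro _ ⟨γ, hγ, rfl⟩
    obtain ⟨t, ht, hnehari⟩ := hγ.exists_mem_nehariManifold hs.1 hsN hX
    exact ⟨_, ⟨γ t, hnehari, rfl⟩, le_csSup (hγ.bddAbove_energy hs.1 hsN hX) ⟨t, ht, rfl⟩⟩
  · rintro _ ⟨u, hu, rfl⟩
    obtain ⟨γ, hγ, hle⟩ := exists_isMountainPassPath_energy_le hs.1 hsN hX hcone hu
    exact ⟨_, ⟨γ, hγ, rfl⟩, csSup_le ((Set.nonempty_Icc.2 zero_le_one).image _)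
      (Set.forall_mem_image.2 hle)⟩

end MinimaxLevels

/-- the mountain-pass value over paths in `Ḣ^s(Ω)^σ_G` equals the Nehari
value `m(Ω)^σ_G`. -/
theorem statement8 (N : ℕ) (s : ℝ) (hN : 2 ≤ N) (hs0 : 0 < s) (hs1 : s < 1)
    (hsN : 2 * s < N)
    (G : Subgroup (ONgrp N)) (hGc : IsClosed (G : Set (ONgrp N)))
    (σ : G →* ℤˣ) (hσ : Continuous σ) (hσs : Function.Surjective σ) (hG2 : CondG2 G σ)
    (Ω : Set (Euc N)) (hΩ : IsOpen Ω) (hΩG : IsInvariantSet G Ω) :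
    sInf {c : ℝ | ∃ γ : ℝ → Euc N → ℝ,
        (∀ t ∈ Set.Icc (0 : ℝ) 1, MemHs N s Ω (γ t) ∧ IsEquivariant G σ (γ t)) ∧
        (∀ t ∈ Set.Icc (0 : ℝ) 1, ∀ ε > (0 : ℝ), ∃ δ > (0 : ℝ), ∀ t' ∈ Set.Icc (0 : ℝ) 1,
          |t' - t| < δ → gagNorm N s (fun x => γ t' x - γ t x) < ε) ∧
        (∀ x : Euc N, γ 0 x = 0) ∧
        ¬ (∀ᵐ x : Euc N, γ 1 x = 0) ∧
        energy N s Ω (γ 1) ≤ 0 ∧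
        c = sSup ((fun t => energy N s Ω (γ t)) '' Set.Icc (0 : ℝ) 1)} =
      mval N s Ω G σ := by
  simpa only [mountainPassLevel, IsMountainPassPath, IsGagContinuousOn, nehariLevel,
    nehariManifold, mval, Set.mem_ofPred_eq, and_assoc] using
    statement8_general (X := {u | MemHs N s Ω u ∧ IsEquivariant G σ u}) ⟨hs0, hs1⟩ hsN
      (fun _ hu => hu.1) fun _ hu c _ => ⟨hu.1.const_mul c, hu.2.const_mul c⟩

end
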